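/- arXiv:2203.06625 — 2 statements merged into one kernel-verified Lean document; each statement's English description precedes it below -/
import Mathlib

section
/- Let q ≥ 3 be a prime power, n ≥ 4, and V = F_q^n. Let f : C(n,2)_q → G_2(V) be an injective map sending adjacent pairs to adjacent pairs such that f(S(P)) is a star of Γ_2(V) for every P ∈ C(n,1)_q. Let g be a bijection of G_1(V) such that f(S^c(P)) ⊆ S(g(P)) for every 1-dimensional subspace P ⊂ V and g(G_1(X)) ⊆ G_1(f(X)) for every X ∈ C(n,2)_q. Then for every 2-dimensional subspace X ⊂ V there exists a 2-dimensional subspace X' ⊂ V with g(G_1(X)) = G_1(X'); that is, g sends lines of the projective space of V to lines. -/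
/-!
Common definitions: `V = F^n`, coordinate hyperplanes, Grassmannians `G_k(V)`,
non-degenerate linear `[n,k]_q` codes `C(n,k)_q`, adjacency, stars, tops,
and (maximal) cliques of the graph `Γ(n,k)_q` of non-degenerate codes.
-/

/-- The `i`-th coordinate hyperplane `C_i ⊂ F^n`: the kernel of the `i`-th
coordinate functional. -/
def coordHyp (F : Type*) [Field F] (n : ℕ) (i : Fin n) : Submodule F (Fin n → F) :=
  LinearMap.ker (LinearMap.proj i : (Fin n → F) →ₗ[F] F)

/-- The Grassmannian `G_k(V)`: the set of `k`-dimensional subspaces of `F^n`. -/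
def grass (F : Type*) [Field F] (n k : ℕ) : Set (Submodule F (Fin n → F)) :=
  {X | Module.finrank F ↥X = k}

/-- `C(n,k)_q`: the set of non-degenerate linear `[n,k]` codes, i.e. `k`-dimensional
subspaces of `F^n` not contained in any coordinate hyperplane. -/
def ndCodes (F : Type*) [Field F] (n k : ℕ) : Set (Submodule F (Fin n → F)) :=
  {X | Module.finrank F ↥X = k ∧ ∀ i : Fin n, ¬ X ≤ coordHyp F n i}

/-- Adjacency of `k`-dimensional subspaces: the intersection is `(k-1)`-dimensional. -/
def adjSub (F : Type*) [Field F] (n k : ℕ) (X Y : Submodule F (Fin n → F)) : Prop :=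
  Module.finrank F ↥(X ⊓ Y) = k - 1

/-- The star `S(X) ⊂ G_k(V)` of a `(k-1)`-dimensional subspace `X`: all `k`-dimensional
subspaces containing `X`. -/
def starOf (F : Type*) [Field F] (n k : ℕ) (X : Submodule F (Fin n → F)) :
    Set (Submodule F (Fin n → F)) :=
  {Y | Module.finrank F ↥Y = k ∧ X ≤ Y}

/-- The top `T(Y) ⊂ G_k(V)` of a `(k+1)`-dimensional subspace `Y`: all `k`-dimensional
subspaces of `Y`. -/
def topOf (F : Type*) [Field F] (n k : ℕ) (Y : Submodule F (Fin n → F)) :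
    Set (Submodule F (Fin n → F)) :=
  {Z | Module.finrank F ↥Z = k ∧ Z ≤ Y}

/-- `S^c(X) = S(X) ∩ C(n,k)_q`. -/
def scOf (F : Type*) [Field F] (n k : ℕ) (X : Submodule F (Fin n → F)) :
    Set (Submodule F (Fin n → F)) :=
  starOf F n k X ∩ ndCodes F n k

/-- `T^c(Y) = T(Y) ∩ C(n,k)_q`. -/
def tcOf (F : Type*) [Field F] (n k : ℕ) (Y : Submodule F (Fin n → F)) :
    Set (Submodule F (Fin n → F)) :=
  topOf F n k Y ∩ ndCodes F n k

/-- `c(X)`: the number of coordinate hyperplanes containing the subspace `X`. -/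
noncomputable def numHyp (F : Type*) [Field F] (n : ℕ) (X : Submodule F (Fin n → F)) : ℕ :=
  Set.ncard {i : Fin n | X ≤ coordHyp F n i}

/-- A clique of the graph `Γ(n,k)_q`: a set of non-degenerate `[n,k]` codes that are
pairwise adjacent. -/
def isClique (F : Type*) [Field F] (n k : ℕ) (S : Set (Submodule F (Fin n → F))) : Prop :=
  S ⊆ ndCodes F n k ∧ S.Pairwise (adjSub F n k)

/-- A maximal clique of `Γ(n,k)_q`: a clique not properly contained in another clique. -/
def isMaxClique (F : Type*) [Field F] (n k : ℕ) (S : Set (Submodule F (Fin n → F))) : Prop :=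
  isClique F n k S ∧ ∀ T, isClique F n k T → S ⊆ T → T = S

/-- `[m]_q = q^{m-1} + ⋯ + q + 1 = (q^m - 1)/(q - 1)`. -/
def gaussNum (q m : ℕ) : ℕ := ∑ i ∈ Finset.range m, q ^ i

/-!
Call a line good if it is a non-degenerate code. Every line through a point with no zero coordinate
is good. If `O` is such a point and `g` maps the points of a subspace `a ∌ O` onto those of `A`,
then `g` maps the points of the cone `O ⊔ a` onto those of `g O ⊔ A`, because the cone is covered by
the good lines joining `O` to the points of `a`. A plane containing two points with no zero
coordinate is the cone over a good line, hence is mapped onto a subspace of rank at most `3`.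
Since `q ≥ 3` and `n ≥ 4`, a line contained in a coordinate hyperplane is the intersection of two
such planes, so its image is the intersection of two subspaces of rank at most `3`: a line.
-/

open Module Submodule

section Points

variable {K V W : Type*} [DivisionRing K] [AddCommGroup V] [Module K V] [AddCommGroup W]
  [Module K W]

/-- The set `G_1(X)` of points of the projective space of `V` lying on the subspace `X`, a point
being encoded as a one-dimensional subspace. -/
def pointsOf (X : Submodule K V) : Set (Submodule K V) :=
  {P | finrank K P = 1 ∧ P ≤ X}

lemma pointsOf_mono {X Y : Submodule K V} (h : X ≤ Y) : pointsOf X ⊆ pointsOf Y :=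
  fun _ hP => ⟨hP.1, hP.2.trans h⟩

lemma pointsOf_inf (X Y : Submodule K V) : pointsOf (X ⊓ Y) = pointsOf X ∩ pointsOf Y := by
  ext P
  simp only [pointsOf, Set.mem_inter_iff, Set.mem_ofPred_eq, le_inf_iff]
  tauto

lemma pointsOf_subset_pointsOf {X Y : Submodule K V} : pointsOf X ⊆ pointsOf Y ↔ X ≤ Y := by
  refine ⟨fun h => le_iff_atom_le_imp.2 fun P hP hPX => ?_, pointsOf_mono⟩
  exact (h ⟨isAtom_iff_finrank_eq_one.1 hP, hPX⟩).2

lemma pointsOf_nonempty_iff {X : Submodule K V} : (pointsOf X).Nonempty ↔ X ≠ ⊥ := by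
  refine ⟨?_, fun hX => ?_⟩
  · rintro ⟨P, hP, hPX⟩ rfl
    exact (isAtom_iff_finrank_eq_one.2 hP).1 (le_bot_iff.1 hPX)
  · obtain ⟨P, hP, hPX⟩ := (eq_bot_or_exists_atom_le X).resolve_left hX
    exact ⟨P, isAtom_iff_finrank_eq_one.1 hP, hPX⟩

lemma disjoint_of_finrank_eq_one {P X : Submodule K V} (hP : finrank K P = 1) (h : ¬ P ≤ X) :
    Disjoint P X :=
  (isAtom_iff_finrank_eq_one.2 hP).not_le_iff_disjoint.1 h

lemma pointsOf_map {f : V →ₗ[K] W} (hf : Function.Injective f) (X : Submodule K V) :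
    pointsOf (X.map f) = Submodule.map f '' pointsOf X := by
  refine Set.Subset.antisymm (fun P ⟨hP, hPX⟩ => ?_) ?_
  · have hmap : (P.comap f).map f = P :=
      map_comap_eq_of_le (hPX.trans LinearMap.map_le_range)
    refine ⟨P.comap f, ⟨?_, ?_⟩, hmap⟩
    · rw [(equivMapOfInjective f hf (P.comap f)).finrank_eq, hmap, hP]
    · exact (comap_mono hPX).trans (comap_map_eq_of_injective hf X).le
  · rintro _ ⟨P, ⟨hP, hPX⟩, rfl⟩
    exact ⟨(equivMapOfInjective f hf P).finrank_eq.symm.trans hP, map_mono hPX⟩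

lemma ncard_pointsOf_map {f : V →ₗ[K] W} (hf : Function.Injective f) (X : Submodule K V) :
    (pointsOf (X.map f)).ncard = (pointsOf X).ncard := by
  rw [pointsOf_map hf, Set.ncard_image_of_injective _ (map_injective_of_injective hf)]

variable [FiniteDimensional K V]

lemma ncard_pointsOf_eq_of_finrank_eq {X Y : Submodule K V} (h : finrank K X = finrank K Y) :
    (pointsOf X).ncard = (pointsOf Y).ncard := by
  let e : X ≃ₗ[K] Y := LinearEquiv.ofFinrankEq X Y h
  have hX := ncard_pointsOf_map X.injective_subtype ⊤
  have hY := ncard_pointsOf_map (f := Y.subtype ∘ₗ e.toLinearMap)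
    (Y.injective_subtype.comp e.injective) ⊤
  rw [Submodule.map_top, range_subtype] at hX
  rw [Submodule.map_top, LinearEquiv.range_comp, range_subtype] at hY
  exact hX.trans hY.symm

lemma finrank_sup_of_finrank_eq_one {P X : Submodule K V} (hP : finrank K P = 1) (h : ¬ P ≤ X) :
    finrank K ↥(P ⊔ X) = finrank K X + 1 := by
  have hdim := finrank_sup_add_finrank_inf_eq P X
  rw [(disjoint_of_finrank_eq_one hP h).eq_bot, finrank_bot, hP] at hdim
  omega

lemma finrank_sup_of_ne {P Q : Submodule K V} (hP : finrank K P = 1) (hQ : finrank K Q = 1)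
    (hPQ : P ≠ Q) : finrank K ↥(P ⊔ Q) = 2 := by
  rw [finrank_sup_of_finrank_eq_one hP fun hle => hPQ (eq_of_le_of_finrank_eq hle (by rw [hP, hQ])),
    hQ]

lemma sup_eq_of_mem_pointsOf {P Q Y : Submodule K V} (hY : finrank K Y = 2)
    (hP : P ∈ pointsOf Y) (hQ : Q ∈ pointsOf Y) (hPQ : P ≠ Q) : P ⊔ Q = Y :=
  eq_of_le_of_finrank_eq (sup_le hP.2 hQ.2) (by rw [finrank_sup_of_ne hP.1 hQ.1 hPQ, hY])

lemma exists_pointsOf_ne {Y : Submodule K V} (hY : 2 ≤ finrank K Y) :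
    ∃ P ∈ pointsOf Y, ∃ Q ∈ pointsOf Y, P ≠ Q := by
  obtain ⟨P, hP⟩ := pointsOf_nonempty_iff.2 (one_le_finrank_iff.1 (one_le_two.trans hY))
  by_contra! h
  have hYP : Y ≤ P := pointsOf_subset_pointsOf.1 fun Q hQ => ⟨hQ.1, (h P hP Q hQ).ge⟩
  have := finrank_mono hYP
  rw [hP.1] at this
  omega

lemma exists_mem_pointsOf_sup_eq_sup {O P a : Submodule K V} (hO : finrank K O = 1)
    (hOa : ¬ O ≤ a) (hP : P ∈ pointsOf (O ⊔ a)) (hPO : P ≠ O) :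
    ∃ T ∈ pointsOf a, O ⊔ T = O ⊔ P := by
  have hsup : O ⊔ a ⊓ (O ⊔ P) = O ⊔ P := by
    rw [← sup_inf_assoc_of_le a le_sup_left]
    exact inf_eq_right.2 (sup_le le_sup_left hP.2)
  refine ⟨a ⊓ (O ⊔ P), ⟨?_, inf_le_left⟩, hsup⟩
  have hdim := finrank_sup_of_finrank_eq_one hO fun h : O ≤ a ⊓ (O ⊔ P) => hOa (h.trans inf_le_left)
  rw [hsup, finrank_sup_of_ne hO hP.1 hPO.symm] at hdim
  omega

lemma pointsOf_sup_eq_biUnion {O a : Submodule K V} (hO : finrank K O = 1) (ha : a ≠ ⊥) :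
    pointsOf (O ⊔ a) = ⋃ T ∈ pointsOf a, pointsOf (O ⊔ T) := by
  refine Set.Subset.antisymm (fun P hP => ?_) ?_
  · suffices ∃ T ∈ pointsOf a, P ≤ O ⊔ T by
      obtain ⟨T, hT, hPT⟩ := this
      exact Set.mem_biUnion hT ⟨hP.1, hPT⟩
    by_cases hOa : O ≤ a
    · exact ⟨P, ⟨hP.1, hP.2.trans (sup_le hOa le_rfl)⟩, le_sup_right⟩
    obtain rfl | hPO := eq_or_ne P O
    · obtain ⟨T, hT⟩ := pointsOf_nonempty_iff.2 ha
      exact ⟨T, hT, le_sup_left⟩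
    · obtain ⟨T, hT, hOT⟩ := exists_mem_pointsOf_sup_eq_sup hO hOa hP hPO
      exact ⟨T, hT, hOT ▸ le_sup_right⟩
  · exact Set.iUnion₂_subset fun T hT => pointsOf_mono (sup_le_sup_left hT.2 O)

end Points

section ModularLattice

variable {α : Type*} [Lattice α] [IsModularLattice α] {a b c : α}

lemma sup_inf_eq_left_of_le_of_disjoint [OrderBot α] (hac : a ≤ c) (hbc : Disjoint b c) :
    (a ⊔ b) ⊓ c = a := by
  rw [sup_inf_assoc_of_le b hac, hbc.eq_bot, sup_bot_eq]

lemma exists_le_disjoint_sup_eq [BoundedOrder α] [ComplementedLattice α] (hab : Disjoint a b)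
    (hac : a ≤ c) (hbc : b ≤ c) : ∃ b', b ≤ b' ∧ Disjoint a b' ∧ a ⊔ b' = c := by
  obtain ⟨d, hd, hdc⟩ := IsModularLattice.exists_disjoint_and_sup_eq (sup_le hac hbc)
  exact ⟨b ⊔ d, le_sup_left, hab.disjoint_sup_right_of_disjoint_sup_left hd,
    by rw [← sup_assoc, hdc]⟩

end ModularLattice

section MapsOntoLine

variable {K V : Type*} [DivisionRing K] [AddCommGroup V] [Module K V]
  {g : Submodule K V → Submodule K V}

/-- The line `Y` is mapped by `g` onto a line; only the values of `g` at points matter. -/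
def MapsOntoLine (g : Submodule K V → Submodule K V) (Y : Submodule K V) : Prop :=
  ∃ Y' : Submodule K V, finrank K Y' = 2 ∧ g '' pointsOf Y = pointsOf Y'

/-- Every line through the point `O` is mapped by `g` onto a line. -/
def MapsPencilOntoLines (g : Submodule K V → Submodule K V) (O : Submodule K V) : Prop :=
  ∀ Y : Submodule K V, finrank K Y = 2 → O ≤ Y → MapsOntoLine g Y

variable [FiniteDimensional K V]

lemma image_pointsOf_eq_of_subset [Finite K] (hg : Set.InjOn g {P | finrank K P = 1})
    {Y Y' : Submodule K V} (hYY' : finrank K Y = finrank K Y')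
    (hsub : g '' pointsOf Y ⊆ pointsOf Y') : g '' pointsOf Y = pointsOf Y' := by
  have : Finite V := Module.finite_of_finite K
  refine Set.eq_of_subset_of_ncard_le hsub ?_ (Set.toFinite _)
  rw [(hg.mono fun _ hP => hP.1).ncard_image, ncard_pointsOf_eq_of_finrank_eq hYY']

lemma MapsOntoLine.image_pointsOf_sup (hg : Set.InjOn g {P | finrank K P = 1})
    {P Q : Submodule K V} (hP : finrank K P = 1) (hQ : finrank K Q = 1) (hPQ : P ≠ Q)
    (h : MapsOntoLine g (P ⊔ Q)) : g '' pointsOf (P ⊔ Q) = pointsOf (g P ⊔ g Q) := by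
  obtain ⟨Y, hY, hgY⟩ := h
  have hgP : g P ∈ pointsOf Y := hgY ▸ Set.mem_image_of_mem g ⟨hP, le_sup_left⟩
  have hgQ : g Q ∈ pointsOf Y := hgY ▸ Set.mem_image_of_mem g ⟨hQ, le_sup_right⟩
  rw [hgY, sup_eq_of_mem_pointsOf hY hgP hgQ (hg.ne hP hQ hPQ)]

lemma MapsPencilOntoLines.finrank_apply {O a : Submodule K V} (h : MapsPencilOntoLines g O)
    (hO : finrank K O = 1) (ha : a ≠ ⊥) (hOa : ¬ O ≤ a) : finrank K (g O) = 1 := by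
  obtain ⟨T, hT⟩ := pointsOf_nonempty_iff.2 ha
  have hOT : O ≠ T := fun h => hOa (h ▸ hT.2)
  obtain ⟨Y, -, hgY⟩ := h (O ⊔ T) (finrank_sup_of_ne hO hT.1 hOT) le_sup_left
  have hgO : g O ∈ pointsOf Y := hgY ▸ Set.mem_image_of_mem g ⟨hO, le_sup_left⟩
  exact hgO.1

lemma MapsPencilOntoLines.image_pointsOf_sup (hg : Set.InjOn g {P | finrank K P = 1})
    {O a A : Submodule K V} (h : MapsPencilOntoLines g O) (hO : finrank K O = 1) (ha : a ≠ ⊥)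
    (hOa : ¬ O ≤ a) (hA : g '' pointsOf a = pointsOf A) :
    g '' pointsOf (O ⊔ a) = pointsOf (g O ⊔ A) := by
  have hA0 : A ≠ ⊥ :=
    pointsOf_nonempty_iff.1 (hA ▸ (pointsOf_nonempty_iff.2 ha).image g)
  have hline : ∀ T ∈ pointsOf a, g '' pointsOf (O ⊔ T) = pointsOf (g O ⊔ g T) := by
    intro T hT
    have hOT : O ≠ T := fun h => hOa (h ▸ hT.2)
    exact (h _ (finrank_sup_of_ne hO hT.1 hOT) le_sup_left).image_pointsOf_sup hg hO hT.1 hOT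
  calc g '' pointsOf (O ⊔ a)
      = ⋃ T ∈ pointsOf a, g '' pointsOf (O ⊔ T) := by
        rw [pointsOf_sup_eq_biUnion hO ha, Set.image_iUnion₂]
    _ = ⋃ T ∈ pointsOf a, pointsOf (g O ⊔ g T) := Set.iUnion₂_congr hline
    _ = ⋃ S ∈ pointsOf A, pointsOf (g O ⊔ S) := by rw [← hA, Set.biUnion_image]
    _ = pointsOf (g O ⊔ A) := (pointsOf_sup_eq_biUnion (h.finrank_apply hO ha hOa) hA0).symm

lemma exists_image_pointsOf_plane_eq (hg : Set.InjOn g {P | finrank K P = 1})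
    {O Q W : Submodule K V} (hW : finrank K W = 3) (hO : O ∈ pointsOf W) (hQ : Q ∈ pointsOf W)
    (hOQ : O ≠ Q) (hgO : MapsPencilOntoLines g O) (hgQ : MapsPencilOntoLines g Q) :
    ∃ Z : Submodule K V, finrank K Z ≤ 3 ∧ g '' pointsOf W = pointsOf Z := by
  have hdisj : Disjoint O Q :=
    (isAtom_iff_finrank_eq_one.2 hO.1).disjoint_of_ne (isAtom_iff_finrank_eq_one.2 hQ.1) hOQ
  obtain ⟨a, hQa, hOa, rfl⟩ := exists_le_disjoint_sup_eq hdisj hO.2 hQ.2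
  have hOa' : ¬ O ≤ a := (isAtom_iff_finrank_eq_one.2 hO.1).not_le_iff_disjoint.2 hOa
  have ha : finrank K a = 2 := by
    rw [finrank_sup_of_finrank_eq_one hO.1 hOa'] at hW
    omega
  have ha0 : a ≠ ⊥ := one_le_finrank_iff.1 (by omega)
  obtain ⟨A, hA, hgA⟩ := hgQ a ha hQa
  refine ⟨g O ⊔ A, ?_, hgO.image_pointsOf_sup hg hO.1 ha0 hOa' hgA⟩
  calc finrank K ↥(g O ⊔ A) ≤ finrank K (g O) + finrank K A :=
        finrank_add_le_finrank_add_finrank _ _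
    _ = 3 := by rw [hgO.finrank_apply hO.1 ha0 hOa', hA]

lemma mapsOntoLine_inf (hg : Set.InjOn g {P | finrank K P = 1}) {W W' Z Z' : Submodule K V}
    (hline : finrank K ↥(W ⊓ W') = 2) (hWW' : ¬ W ≤ W') (hZ : finrank K Z ≤ 3)
    (hgW : g '' pointsOf W = pointsOf Z) (hgW' : g '' pointsOf W' = pointsOf Z') :
    MapsOntoLine g (W ⊓ W') := by
  have hmono (Y : Submodule K V) : pointsOf Y ⊆ {P | finrank K P = 1} := fun _ hP => hP.1
  have himage : g '' pointsOf (W ⊓ W') = pointsOf (Z ⊓ Z') := by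
    rw [pointsOf_inf, hg.image_inter (hmono W) (hmono W'), hgW, hgW', pointsOf_inf]
  refine ⟨Z ⊓ Z', le_antisymm ?_ ?_, himage⟩
  · have hZZ' : ¬ Z ≤ Z' := by
      rwa [← pointsOf_subset_pointsOf, ← hgW, ← hgW',
        hg.image_subset_image_iff (hmono W) (hmono W'), pointsOf_subset_pointsOf]
    have := finrank_lt_finrank_of_lt (inf_lt_left.2 hZZ')
    omega
  · obtain ⟨P, hP, Q, hQ, hPQ⟩ := exists_pointsOf_ne hline.ge
    have hgP : g P ∈ pointsOf (Z ⊓ Z') := himage ▸ Set.mem_image_of_mem g hP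
    have hgQ : g Q ∈ pointsOf (Z ⊓ Z') := himage ▸ Set.mem_image_of_mem g hQ
    rw [← finrank_sup_of_ne hgP.1 hgQ.1 (hg.ne hP.1 hQ.1 hPQ)]
    exact finrank_mono (sup_le hgP.2 hgQ.2)

end MapsOntoLine

section Coordinates

lemma exists_single_notMem {R ι : Type*} [Semiring R] [Finite ι] [DecidableEq ι]
    {p : Submodule R (ι → R)} (hp : p ≠ ⊤) : ∃ k, Pi.single k 1 ∉ p := by
  by_contra! h
  refine hp (top_le_iff.1 ?_)
  rw [← (Pi.basisFun R ι).span_eq, span_le]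
  rintro _ ⟨k, rfl⟩
  simpa only [Pi.basisFun_apply, SetLike.mem_coe] using h k

lemma exists_mem_ne_zero_apply_eq_zero {K V : Type*} [DivisionRing K] [AddCommGroup V] [Module K V]
    {X : Submodule K V} (hX : 1 < finrank K X) (φ : V →ₗ[K] K) : ∃ x ∈ X, x ≠ 0 ∧ φ x = 0 := by
  have : FiniteDimensional K X := .of_finrank_pos (by omega)
  have hker : LinearMap.ker (φ ∘ₗ X.subtype) ≠ ⊥ :=
    LinearMap.ker_ne_bot_of_finrank_lt (by rwa [finrank_self])
  obtain ⟨x, hx, hx0⟩ := exists_mem_ne_zero_of_ne_bot hker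
  exact ⟨x, x.2, fun h => hx0 (Subtype.ext h), hx⟩

variable {F : Type*} [Field F] {n : ℕ}

lemma mem_coordHyp {i : Fin n} {x : Fin n → F} : x ∈ coordHyp F n i ↔ x i = 0 := Iff.rfl

lemma mem_ndCodes_of_mem_of_forall_ne_zero {X : Submodule F (Fin n → F)} {o : Fin n → F}
    (ho : o ∈ X) (ho0 : ∀ m, o m ≠ 0) : X ∈ ndCodes F n (finrank F X) :=
  ⟨rfl, fun m hm => ho0 m (hm ho)⟩

lemma disjoint_span_singleton_coordHyp {i : Fin n} {o : Fin n → F} (ho : o i ≠ 0) :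
    Disjoint (span F {o}) (coordHyp F n i) := by
  refine disjoint_of_finrank_eq_one (finrank_span_singleton ?_) fun h => ho ?_
  · rintro rfl
    exact ho rfl
  · exact h (mem_span_singleton_self o)

lemma exists_single_notMem_of_finrank_add_one_lt {X : Submodule F (Fin n → F)}
    (hX : finrank F X + 1 < n) (i : Fin n) : ∃ k ≠ i, Pi.single k 1 ∉ X := by
  have hne : X ⊔ span F {Pi.single i 1} ≠ ⊤ := by
    intro htop
    have hdim := finrank_add_le_finrank_add_finrank X (span F {(Pi.single i 1 : Fin n → F)})
    rw [htop, finrank_top, finrank_fin_fun,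
      finrank_span_singleton (Pi.single_ne_zero_iff.2 one_ne_zero)] at hdim
    omega
  obtain ⟨k, hk⟩ := exists_single_notMem hne
  refine ⟨k, ?_, fun h => hk (mem_sup_left h)⟩
  rintro rfl
  exact hk (mem_sup_right (mem_span_singleton_self _))

lemma exists_pair_forall_ne_zero_notMem_sup (hF : 3 ≤ ENat.card F)
    {X : Submodule F (Fin n → F)} (hX : 1 < finrank F X) (hXn : finrank F X + 1 < n)
    {i : Fin n} (hXi : X ≤ coordHyp F n i) :
    ∃ x ∈ X, x ≠ 0 ∧ ∃ o o' : Fin n → F, (∀ m, o m ≠ 0 ∧ (o + x) m ≠ 0) ∧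
      (∀ m, o' m ≠ 0 ∧ (o' + x) m ≠ 0) ∧ o' ∉ X ⊔ span F {o} := by
  obtain ⟨k, hki, hkX⟩ := exists_single_notMem_of_finrank_add_one_lt hXn i
  obtain ⟨x, hx, hx0, hxk⟩ := exists_mem_ne_zero_apply_eq_zero hX (LinearMap.proj k)
  choose o ho hox using fun m => ENat.exists_ne_ne_of_three_le hF 0 (-x m)
  obtain ⟨d, hd0, hdo⟩ := ENat.exists_ne_ne_of_three_le hF 0 (-o k)
  have hox' (m : Fin n) : o m + x m ≠ 0 := fun h => hox m (eq_neg_of_add_eq_zero_left h)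
  -- `o + d • e_k` leaves `X ⊔ span {o}` because `e_k ∉ X`, and `x k = 0` makes the two conditions
  -- on its `k`-th coordinate coincide, so only one value of `d` besides `0` has to be avoided.
  refine ⟨x, hx, hx0, o, o + Pi.single k d, fun m => ⟨ho m, hox' m⟩, fun m => ?_, fun hmem => ?_⟩
  · obtain rfl | hmk := eq_or_ne m k
    · have hod : o m + d ≠ 0 := fun h => hdo (eq_neg_of_add_eq_zero_right h)
      have hxm : x m = 0 := hxk
      simpa only [Pi.add_apply, Pi.single_eq_same, hxm, add_zero, and_self] using hod
    · simpa only [Pi.add_apply, Pi.single_eq_of_ne hmk, add_zero] using ⟨ho m, hox' m⟩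
  · have hsingle : (Pi.single k d : Fin n → F) ∈ X ⊔ span F {o} := by
      simpa only [add_sub_cancel_left] using
        sub_mem hmem (mem_sup_right (mem_span_singleton_self o))
    have hsingleX : (Pi.single k d : Fin n → F) ∈ X := by
      rw [← sup_inf_eq_left_of_le_of_disjoint hXi (disjoint_span_singleton_coordHyp (ho i))]
      exact ⟨hsingle, mem_coordHyp.2 (Pi.single_eq_of_ne hki.symm _)⟩
    refine hkX ?_
    simpa only [← Pi.single_smul', smul_eq_mul, inv_mul_cancel₀ hd0] using
      X.smul_mem d⁻¹ hsingleX

variable {g : Submodule F (Fin n → F) → Submodule F (Fin n → F)}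

lemma mapsPencilOntoLines_span_singleton (hline : ∀ Y ∈ ndCodes F n 2, MapsOntoLine g Y)
    {o : Fin n → F} (ho : ∀ m, o m ≠ 0) : MapsPencilOntoLines g (span F {o}) := by
  intro Y hY hoY
  have hoY' : o ∈ Y := hoY (mem_span_singleton_self o)
  exact hline Y (hY ▸ mem_ndCodes_of_mem_of_forall_ne_zero hoY' ho)

lemma exists_image_pointsOf_sup_span_singleton_eq (hg : Set.InjOn g (grass F n 1))
    (hline : ∀ Y ∈ ndCodes F n 2, MapsOntoLine g Y) {X : Submodule F (Fin n → F)}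
    (hX : finrank F X = 2) {i : Fin n} (hXi : X ≤ coordHyp F n i) {x o : Fin n → F} (hx : x ∈ X)
    (hx0 : x ≠ 0) (ho : ∀ m, o m ≠ 0 ∧ (o + x) m ≠ 0) :
    ∃ Z : Submodule F (Fin n → F), finrank F Z ≤ 3 ∧
      g '' pointsOf (X ⊔ span F {o}) = pointsOf Z := by
  have hoi : o ∉ coordHyp F n i := fun h => (ho i).1 h
  have hrank {v : Fin n → F} (hv : v i ≠ 0) : finrank F (span F {v}) = 1 :=
    finrank_span_singleton fun h => hv (congrFun h i)
  have hO : span F {o} ∈ pointsOf (X ⊔ span F {o}) := ⟨hrank (ho i).1, le_sup_right⟩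
  have hQ : span F {o + x} ∈ pointsOf (X ⊔ span F {o}) := by
    refine ⟨hrank (ho i).2, (span_singleton_le_iff_mem _ _).2 ?_⟩
    exact add_mem (mem_sup_right (mem_span_singleton_self o)) (mem_sup_left hx)
  have hOQ : span F {o} ≠ span F {o + x} := by
    intro h
    have hoxo : o + x ∈ span F {o} := h ▸ mem_span_singleton_self (o + x)
    have hxo : x ∈ span F {o} := by
      simpa only [add_sub_cancel_left] using sub_mem hoxo (mem_span_singleton_self o)
    exact hx0 (disjoint_def.1 (disjoint_span_singleton_coordHyp (ho i).1) x hxo (hXi hx))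
  have hW : finrank F ↥(X ⊔ span F {o}) = 3 := by
    rw [sup_comm, finrank_sup_of_finrank_eq_one hO.1, hX]
    exact fun h => hoi (hXi (h (mem_span_singleton_self o)))
  exact exists_image_pointsOf_plane_eq hg hW hO hQ hOQ
    (mapsPencilOntoLines_span_singleton hline fun m => (ho m).1)
    (mapsPencilOntoLines_span_singleton hline fun m => (ho m).2)

end Coordinates

theorem stmt_13_general {F : Type*} [Field F] {n : ℕ} (hF : 3 ≤ ENat.card F) (hn : 4 ≤ n)
    {g : Submodule F (Fin n → F) → Submodule F (Fin n → F)} (hg : Set.InjOn g (grass F n 1))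
    (hline : ∀ Y ∈ ndCodes F n 2, MapsOntoLine g Y) {X : Submodule F (Fin n → F)}
    (hX : finrank F X = 2) : MapsOntoLine g X := by
  by_cases hnd : X ∈ ndCodes F n 2
  · exact hline X hnd
  obtain ⟨i, hXi⟩ : ∃ i, X ≤ coordHyp F n i := by
    by_contra! h
    exact hnd ⟨hX, h⟩
  obtain ⟨x, hx, hx0, o, o', ho, ho', hoo'⟩ :=
    exists_pair_forall_ne_zero_notMem_sup hF (by omega) (by omega) hXi
  obtain ⟨Z, -, hgW⟩ := exists_image_pointsOf_sup_span_singleton_eq hg hline hX hXi hx hx0 ho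
  obtain ⟨Z', hZ', hgW'⟩ := exists_image_pointsOf_sup_span_singleton_eq hg hline hX hXi hx hx0 ho'
  have hnle : ¬ span F {o'} ≤ X ⊔ span F {o} := by rwa [span_singleton_le_iff_mem]
  have hrank : finrank F (span F {o'}) = 1 :=
    finrank_span_singleton fun h => (ho' i).1 (congrFun h i)
  have hinf : (X ⊔ span F {o'}) ⊓ (X ⊔ span F {o}) = X :=
    sup_inf_eq_left_of_le_of_disjoint le_sup_left (disjoint_of_finrank_eq_one hrank hnle)
  have hmaps := mapsOntoLine_inf hg (by rw [hinf, hX])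
    (fun h => hnle (le_sup_right.trans h)) hZ' hgW' hgW
  rwa [hinf] at hmaps

/-- (`q ≥ 3`, `n ≥ 4`.) In the setting of Statement 11, if moreover
`g` is a bijection of `G_1(V)` with `g(G_1(X)) ⊆ G_1(f(X))` for every `X ∈ C(n,2)_q`,
then `g` sends every line `G_1(X)` of the projective space of `V` to a line. -/
theorem stmt_13 (q n : ℕ) (F : Type*) [Field F] [Fintype F]
    (hF : Fintype.card F = q) (hq : 3 ≤ q) (hn : 4 ≤ n)
    (f : Submodule F (Fin n → F) → Submodule F (Fin n → F))
    (hmem : ∀ X ∈ ndCodes F n 2, f X ∈ grass F n 2)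
    (hinj : Set.InjOn f (ndCodes F n 2))
    (hadj : ∀ X ∈ ndCodes F n 2, ∀ Y ∈ ndCodes F n 2,
      adjSub F n 2 X Y → adjSub F n 2 (f X) (f Y))
    (hstar : ∀ P ∈ ndCodes F n 1, ∃ P' : Submodule F (Fin n → F),
      Module.finrank F ↥P' = 1 ∧ f '' starOf F n 2 P = starOf F n 2 P')
    (g : Submodule F (Fin n → F) → Submodule F (Fin n → F))
    (hgbij : Set.BijOn g (grass F n 1) (grass F n 1))
    (hg : ∀ P ∈ grass F n 1, f '' scOf F n 2 P ⊆ starOf F n 2 (g P))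
    (hg2 : ∀ X ∈ ndCodes F n 2,
      g '' {P : Submodule F (Fin n → F) | Module.finrank F ↥P = 1 ∧ P ≤ X} ⊆
        {P : Submodule F (Fin n → F) | Module.finrank F ↥P = 1 ∧ P ≤ f X}) :
    ∀ X : Submodule F (Fin n → F), Module.finrank F ↥X = 2 →
      ∃ X' : Submodule F (Fin n → F), Module.finrank F ↥X' = 2 ∧
        g '' {P : Submodule F (Fin n → F) | Module.finrank F ↥P = 1 ∧ P ≤ X} =
          {P : Submodule F (Fin n → F) | Module.finrank F ↥P = 1 ∧ P ≤ X'} := by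
  intro X hX
  exact stmt_13_general (by rw [ENat.card_eq_coe_fintype_card, hF]; exact_mod_cast hq) hn
    hgbij.injOn (fun Y hY => ⟨f Y, hmem Y hY,
      image_pointsOf_eq_of_subset hgbij.injOn (hY.1.trans (hmem Y hY).symm) (hg2 Y hY)⟩) hX
end

section
/- Let q ≥ 3 be a prime power and 1 < k < n−1. For every (k−1)-dimensional subspace X ⊂ V there exist Z_1, Z_2 ∈ C(n,k)_q such that X = Z_1 ∩ Z_2 and each of Z_1, Z_2 contains an element of C(n,1)_q (a 1-dimensional subspace not contained in any coordinate hyperplane). -/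
/-!
When `|F| ≥ 3`, every vector of `F^n` is a difference of two vectors without zero coordinates, so no
proper subspace contains all such vectors. Choosing `v ∉ X` and then `w ∉ X ⊔ ⟨v⟩` of this kind, the
codes `X ⊔ ⟨v⟩` and `X ⊔ ⟨w⟩` meet in `X` by modularity.
-/

section NowhereZero

variable {ι : Type*} {A : ι → Type*} [∀ i, AddGroup (A i)]

lemma exists_nowhere_zero_sub_eq (hA : ∀ i, 3 ≤ ENat.card (A i)) (a : ∀ i, A i) :
    ∃ u v : ∀ i, A i, (∀ i, u i ≠ 0) ∧ (∀ i, v i ≠ 0) ∧ u - v = a := by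
  choose v hv hav using fun i ↦ ENat.exists_ne_ne_of_three_le (hA i) 0 (-a i)
  refine ⟨a + v, v, fun i hi ↦ hav i ?_, hv, add_sub_cancel_right a v⟩
  exact (neg_eq_of_add_eq_zero_right hi).symm

lemma exists_nowhere_zero_notMem {S : Type*} [SetLike S (∀ i, A i)]
    [AddSubgroupClass S (∀ i, A i)] (hA : ∀ i, 3 ≤ ENat.card (A i)) {W : S} (hW : ∃ a, a ∉ W) :
    ∃ v : ∀ i, A i, (∀ i, v i ≠ 0) ∧ v ∉ W := by
  by_contra! h
  obtain ⟨a, ha⟩ := hW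
  obtain ⟨u, v, hu, hv, rfl⟩ := exists_nowhere_zero_sub_eq hA a
  exact ha (sub_mem (h u hu) (h v hv))

end NowhereZero

lemma inf_sup_span_singleton_of_notMem {K V : Type*} [DivisionRing K] [AddCommGroup V] [Module K V]
    {X Y : Submodule K V} (hXY : X ≤ Y) {w : V} (hw : w ∉ Y) :
    Y ⊓ (X ⊔ Submodule.span K {w}) = X := by
  have hdisj : Submodule.span K {w} ⊓ Y = ⊥ :=
    (Submodule.disjoint_span_singleton_of_notMem hw).symm.eq_bot
  rw [inf_comm, sup_inf_assoc_of_le _ hXY, hdisj, sup_bot_eq]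

section Codes

variable {F : Type*} [Field F] {n : ℕ} {v : Fin n → F}

lemma sup_span_singleton_mem_ndCodes (hv : ∀ i, v i ≠ 0) {X : Submodule F (Fin n → F)}
    (hvX : v ∉ X) : X ⊔ Submodule.span F {v} ∈ ndCodes F n (Module.finrank F X + 1) :=
  ⟨Submodule.finrank_sup_span_singleton hvX, fun i hi ↦
    hv i (hi (Submodule.mem_sup_right (Submodule.mem_span_singleton_self v)))⟩

lemma span_singleton_mem_ndCodes (hv : ∀ i, v i ≠ 0) (hv₀ : v ≠ 0) :
    Submodule.span F {v} ∈ ndCodes F n 1 := by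
  simpa using sup_span_singleton_mem_ndCodes hv (X := ⊥) (by simpa using hv₀)

end Codes

theorem stmt_14_general {n k : ℕ} {F : Type*} [Field F] (hF : 3 ≤ ENat.card F) (hkn : k < n)
    {X : Submodule F (Fin n → F)} (hX : Module.finrank F X + 1 = k) :
    ∃ Z₁ ∈ ndCodes F n k, ∃ Z₂ ∈ ndCodes F n k,
      X = Z₁ ⊓ Z₂ ∧
      (∃ P ∈ ndCodes F n 1, P ≤ Z₁) ∧
      (∃ P ∈ ndCodes F n 1, P ≤ Z₂) := by
  subst hX
  have exists_notMem {W : Submodule F (Fin n → F)} (hW : Module.finrank F W < n) :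
      ∃ v : Fin n → F, (∀ i, v i ≠ 0) ∧ v ∉ W :=
    exists_nowhere_zero_notMem (fun _ ↦ hF) <| SetLike.exists_not_mem_of_ne_top W
      (Submodule.lt_top_of_finrank_lt_finrank (by simpa using hW)).ne
  obtain ⟨v, hv, hvX⟩ := exists_notMem (W := X) (by omega)
  have hZ₁ := sup_span_singleton_mem_ndCodes hv hvX
  obtain ⟨w, hw, hwZ⟩ := exists_notMem (hZ₁.1.trans_lt hkn)
  have hwX : w ∉ X := fun h ↦ hwZ (Submodule.mem_sup_left h)
  exact ⟨_, hZ₁, _, sup_span_singleton_mem_ndCodes hw hwX,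
    (inf_sup_span_singleton_of_notMem le_sup_left hwZ).symm,
    ⟨_, span_singleton_mem_ndCodes hv (ne_of_mem_of_not_mem X.zero_mem hvX).symm, le_sup_right⟩,
    ⟨_, span_singleton_mem_ndCodes hw (ne_of_mem_of_not_mem X.zero_mem hwX).symm, le_sup_right⟩⟩

/-- (`q ≥ 3`, `1 < k < n-1`.) For every `(k-1)`-dimensional subspace
`X ⊂ V` there exist `Z₁, Z₂ ∈ C(n,k)_q` such that `X = Z₁ ∩ Z₂` and each `Zᵢ` contains
an element of `C(n,1)_q`. -/
theorem stmt_14 (q n k : ℕ) (F : Type*) [Field F] [Fintype F]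
    (hF : Fintype.card F = q) (hq : 3 ≤ q) (hk : 1 < k) (hkn : k < n - 1)
    (X : Submodule F (Fin n → F)) (hX : Module.finrank F ↥X = k - 1) :
    ∃ Z₁ ∈ ndCodes F n k, ∃ Z₂ ∈ ndCodes F n k,
      X = Z₁ ⊓ Z₂ ∧
      (∃ P ∈ ndCodes F n 1, P ≤ Z₁) ∧
      (∃ P ∈ ndCodes F n 1, P ≤ Z₂) := by
  have hcard : 3 ≤ ENat.card F := by rw [ENat.card_eq_coe_fintype_card, hF]; exact_mod_cast hq
  exact stmt_14_general hcard (by omega) (by omega)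
end
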